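/- Let v and u be real-valued functions in L¹([−π,π]) ∩ L²([−π,π]) with Fourier coefficients {v_j} and {u_j}. Suppose |v(ω)| ≤ M₁ < ∞ and v(ω) ≥ m > 0 for almost every ω, and Σ_{j=−∞}^{∞} |j| |u_j|² ≤ M₂ < ∞. Then for every n ≥ 1, tr{[T_n(v)^{−1} T_n(vu)]²} ≤ (n/π) ∫_{−π}^{π} u(ω)² dω + 8 m^{−2} M₁² M₂. -/

import Mathlib

open MeasureTheory

/-- The `j`-th Fourier coefficient `v_j = (1/(2π)) ∫_{−π}^{π} v(ω) e^{−iωj} dω` of an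
integrable function `v` on `[−π, π]`. -/
noncomputable def fCoef (v : ℝ → ℝ) (j : ℤ) : ℂ :=
  (((2 * Real.pi)⁻¹ : ℝ) : ℂ) *
    ∫ ω in Set.Icc (-Real.pi) Real.pi, (v ω : ℂ) * Complex.exp (-(Complex.I * ω * j))

/-- The `n×n` Toeplitz matrix `T_n(v)` with entries `[T_n(v)]_{jk} = v_{j−k}`. -/
noncomputable def Toep (n : ℕ) (v : ℝ → ℝ) : Matrix (Fin n) (Fin n) ℂ :=
  Matrix.of fun j k : Fin n => fCoef v ((j : ℤ) - (k : ℤ))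

namespace Stmt19Aux

open Complex

/-- The reference measure. -/
noncomputable abbrev mu : Measure ℝ := volume.restrict (Set.Icc (-Real.pi) Real.pi)

/-- Fourier coefficients of complex functions. -/
noncomputable def cf (f : ℝ → ℂ) (j : ℤ) : ℂ :=
  (((2 * Real.pi)⁻¹ : ℝ) : ℂ) * ∫ ω, f ω * Complex.exp (-(Complex.I * ω * j)) ∂mu

/-- Exponentials. -/
noncomputable def ee (k : ℤ) (ω : ℝ) : ℂ := Complex.exp (Complex.I * ω * k)

lemma ee_cont (k : ℤ) : Continuous (ee k) := by unfold ee; fun_prop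

lemma ee_norm (k : ℤ) (ω : ℝ) : ‖ee k ω‖ = 1 := by
  unfold ee
  rw [show Complex.I * ω * k = ((ω * k : ℝ) : ℂ) * Complex.I by push_cast; ring]
  exact Complex.norm_exp_ofReal_mul_I _

lemma conj_ee (k : ℤ) (ω : ℝ) : (starRingEnd ℂ) (ee k ω) = Complex.exp (-(Complex.I * ω * k)) := by
  unfold ee
  rw [← Complex.exp_conj]
  simp

lemma ee_neg (k : ℤ) (ω : ℝ) : Complex.exp (-(Complex.I * ω * k)) = ee (-k) ω := by
  unfold ee; push_cast; ring_nf

lemma memLp_ee_mul {p : ENNReal} {f : ℝ → ℂ} (hf : MemLp f p mu) (k : ℤ) :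
    MemLp (fun ω => ee k ω * f ω) p mu := by
  refine hf.of_le ((ee_cont k).aestronglyMeasurable.mul hf.1) ?_
  filter_upwards with ω
  simp [ee_norm]

lemma int_ee_mul {f : ℝ → ℂ} (hf : Integrable f mu) (k : ℤ) :
    Integrable (fun ω => ee k ω * f ω) mu := by
  rw [← memLp_one_iff_integrable] at *
  exact memLp_ee_mul hf k

lemma memLp_ee {p : ENNReal} (k : ℤ) : MemLp (ee k) p mu := by
  have := memLp_ee_mul (p := p) (f := fun _ => 1) (memLp_const _) k
  simpa using this

lemma cf_shift (f : ℝ → ℂ) (k j : ℤ) : cf (fun ω => ee k ω * f ω) j = cf f (j - k) := by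
  unfold cf
  congr 2
  ext ω
  unfold ee
  dsimp only
  rw [mul_comm (Complex.exp _) (f ω), mul_assoc, ← Complex.exp_add]
  push_cast; ring_nf

lemma cf_sum {ι : Type*} (s : Finset ι) (f : ι → ℝ → ℂ) (c : ι → ℂ)
    (hf : ∀ i ∈ s, Integrable (f i) mu) (j : ℤ) :
    cf (fun ω => ∑ i ∈ s, c i * f i ω) j = ∑ i ∈ s, c i * cf (f i) j := by
  unfold cf
  simp_rw [Finset.sum_mul]
  rw [integral_finsetSum, Finset.mul_sum]
  · refine Finset.sum_congr rfl fun i _ => ?_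
    simp_rw [mul_assoc (c i)]
    rw [integral_const_mul]; ring
  · intro i hi
    have := (int_ee_mul (hf i hi) (-j)).const_mul (c i)
    refine this.congr ?_
    filter_upwards with ω
    rw [ee_neg]; ring

lemma cf_sub (f g : ℝ → ℂ) (hf : Integrable f mu) (hg : Integrable g mu) (j : ℤ) :
    cf (fun ω => f ω - g ω) j = cf f j - cf g j := by
  unfold cf
  simp_rw [sub_mul, ee_neg]
  rw [integral_sub, mul_sub]
  · simpa only [mul_comm] using int_ee_mul hf (-j)
  · simpa only [mul_comm] using int_ee_mul hg (-j)

lemma cf_one (j : ℤ) : cf (fun _ => 1) j = if j = 0 then 1 else 0 := by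
  unfold cf
  rw [integral_Icc_eq_integral_Ioc, ← intervalIntegral.integral_of_le (by linarith [Real.pi_pos])]
  split_ifs with h
  · subst h
    simp
    field_simp
    norm_num
  · have hj : (-(Complex.I * j) : ℂ) ≠ 0 := by simp [h]
    have : ∀ ω : ℝ, (1 : ℂ) * Complex.exp (-(Complex.I * ω * j)) =
        Complex.exp (-(Complex.I * j) * ω) := by intro ω; ring_nf
    simp_rw [this]
    rw [integral_exp_mul_complex hj]
    have e : Complex.exp (-(Complex.I * j) * (Real.pi : ℝ)) =
        Complex.exp (-(Complex.I * j) * ((-Real.pi : ℝ) : ℂ)) := by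
      rw [Complex.exp_eq_exp_iff_exists_int]
      refine ⟨-j, ?_⟩
      push_cast; ring
    rw [e]; simp

lemma cf_ee (k j : ℤ) : cf (ee k) j = if j = k then 1 else 0 := by
  have := cf_shift (fun _ => 1) k j
  simp only [mul_one] at this
  rw [show ee k = fun ω => ee k ω from rfl, this, cf_one]
  simp [sub_eq_zero]

lemma parseval {f : ℝ → ℂ} (hf : MemLp f 2 mu) :
    HasSum (fun j => ‖cf f j‖ ^ 2) ((2 * Real.pi)⁻¹ * ∫ ω, ‖f ω‖ ^ 2 ∂mu) := by
  have hab : -Real.pi < Real.pi := by linarith [Real.pi_pos]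
  have hf' : MemLp f 2 (volume.restrict (Set.Ioc (-Real.pi) Real.pi)) :=
    hf.mono_measure (Measure.restrict_mono Set.Ioc_subset_Icc_self le_rfl)
  have := hasSum_sq_fourierCoeffOn hab hf'
  rw [intervalIntegral.integral_of_le hab.le, ← integral_Icc_eq_integral_Ioc] at this
  convert this using 1
  · ext j
    rw [fourierCoeffOn_eq_integral, intervalIntegral.integral_of_le hab.le,
      ← integral_Icc_eq_integral_Ioc]
    unfold cf
    congr 2
    rw [Complex.real_smul]
    congr 1
    · push_cast; ring
    · congr 1
      ext ω
      rw [fourier_coe_apply, smul_eq_mul, mul_comm]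
      congr 2
      have := Real.pi_ne_zero
      push_cast
      field_simp
      ring
  · rw [smul_eq_mul]; congr 1; ring

lemma bessel {f : ℝ → ℂ} (hf : MemLp f 2 mu) (s : Finset ℤ) :
    ∑ j ∈ s, ‖cf f j‖ ^ 2 ≤ (2 * Real.pi)⁻¹ * ∫ ω, ‖f ω‖ ^ 2 ∂mu :=
  sum_le_hasSum s (fun _ _ => by positivity) (parseval hf)

lemma int_ofReal {v : ℝ → ℝ} (hv : Integrable v mu) : Integrable (fun ω => (v ω : ℂ)) mu :=
  hv.ofReal

lemma fin_cast_inj {n : ℕ} : Function.Injective (fun j : Fin n => (j : ℤ)) := by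
  intro a b h
  simp only at h
  ext; exact_mod_cast h

lemma bessel_fin {f : ℝ → ℂ} (hf : MemLp f 2 mu) (n : ℕ) (k : ℤ) :
    ∑ j : Fin n, ‖cf f ((j : ℤ) - k)‖ ^ 2 ≤ (2 * Real.pi)⁻¹ * ∫ ω, ‖f ω‖ ^ 2 ∂mu := by
  have hi : Function.Injective (fun j : Fin n => (j : ℤ) - k) := by
    intro a b h
    exact fin_cast_inj (by simpa using h)
  have := bessel hf (Finset.univ.map ⟨_, hi⟩)
  rwa [Finset.sum_map] at this

lemma cf_trig {n : ℕ} (x : Fin n → ℂ) (j : Fin n) :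
    cf (fun ω => ∑ k, x k * ee k ω) j = x j := by
  rw [cf_sum _ _ _ (fun i _ => memLp_one_iff_integrable.1 (memLp_ee _))]
  simp only [cf_ee]
  rw [Finset.sum_eq_single j]
  · simp
  · intro b _ hb
    rw [if_neg, mul_zero]
    intro h; exact hb (fin_cast_inj h).symm
  · simp

lemma trig_memLp {p : ENNReal} {n : ℕ} (x : Fin n → ℂ) :
    MemLp (fun ω => ∑ k, x k * ee k ω) p mu :=
  memLp_finsetSum _ fun k _ => (memLp_ee (k : ℤ)).const_mul (x k)

lemma trig_mul_memLp {p : ENNReal} {n : ℕ} (x : Fin n → ℂ) {f : ℝ → ℂ} (hf : MemLp f p mu) :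
    MemLp (fun ω => f ω * ∑ k, x k * ee k ω) p mu := by
  simp_rw [Finset.mul_sum]
  refine memLp_finsetSum _ fun k _ => ?_
  refine ((memLp_ee_mul hf (k : ℤ)).const_mul (x k)).ae_eq ?_
  filter_upwards with ω
  ring

lemma toep_mulVec {n : ℕ} (v : ℝ → ℝ) (hv : Integrable v mu) (x : Fin n → ℂ) (j : Fin n) :
    (Toep n v).mulVec x j = cf (fun ω => (v ω : ℂ) * ∑ k, x k * ee k ω) j := by
  have e : (fun ω => (v ω : ℂ) * ∑ k, x k * ee k ω) =
      fun ω => ∑ k, x k * (ee k ω * (v ω : ℂ)) := by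
    ext ω
    rw [Finset.mul_sum]
    refine Finset.sum_congr rfl fun k _ => by ring
  rw [e, cf_sum _ _ (fun (k : Fin n) => x k) (fun i _ => int_ee_mul (int_ofReal hv) _)]
  simp only [cf_shift]
  unfold Matrix.mulVec dotProduct Toep
  refine Finset.sum_congr rfl fun k _ => ?_
  rw [mul_comm]
  rfl

lemma coercive {n : ℕ} (v : ℝ → ℝ) (M₁ m : ℝ) (hm : 0 < m) (hv : Integrable v mu)
    (hM1 : ∀ᵐ ω ∂mu, |v ω| ≤ M₁) (hlow : ∀ᵐ ω ∂mu, m ≤ v ω) (x : Fin n → ℂ) :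
    m * ∑ j, ‖x j‖ ^ 2 ≤ (∑ j, (starRingEnd ℂ) (x j) * (Toep n v).mulVec x j).re := by
  set p : ℝ → ℂ := fun ω => ∑ k, x k * ee k ω with hp
  have hpL : MemLp p 2 mu := trig_memLp x
  have hpi : Integrable (fun ω => ‖p ω‖ ^ 2) mu := hpL.integrable_norm_pow (by norm_num)
  have hvm : AEStronglyMeasurable (fun ω => v ω * ‖p ω‖ ^ 2) mu := hv.1.mul hpi.1
  have hvp : Integrable (fun ω => v ω * ‖p ω‖ ^ 2) mu := by
    refine (hpi.const_mul M₁).mono hvm ?_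
    filter_upwards [hM1] with ω h
    rw [norm_mul, norm_mul]
    gcongr
    exact (h.trans (le_abs_self _))
  have hfi : Integrable (fun ω => (v ω : ℂ) * p ω) mu :=
    memLp_one_iff_integrable.1 (trig_mul_memLp x (memLp_one_iff_integrable.2 (int_ofReal hv)))
  have key : ∑ j, (starRingEnd ℂ) (x j) * (Toep n v).mulVec x j =
      (((2 * Real.pi)⁻¹ * ∫ ω, v ω * ‖p ω‖ ^ 2 ∂mu : ℝ) : ℂ) := by
    simp_rw [toep_mulVec v hv x]
    rw [Complex.ofReal_mul, ← integral_complex_ofReal]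
    have : ∀ ω : ℝ, ((v ω * ‖p ω‖ ^ 2 : ℝ) : ℂ) =
        ∑ j : Fin n, (starRingEnd ℂ) (x j) *
          ((v ω : ℂ) * p ω * Complex.exp (-(Complex.I * ω * ((j : ℕ) : ℤ)))) := by
      intro ω
      have h1 : ((‖p ω‖ ^ 2 : ℝ) : ℂ) = p ω * (starRingEnd ℂ) (p ω) := by
        rw [Complex.mul_conj, Complex.normSq_eq_norm_sq]
      rw [Complex.ofReal_mul, h1]
      have h2 : (starRingEnd ℂ) (p ω) = ∑ j : Fin n, (starRingEnd ℂ) (x j) *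
          Complex.exp (-(Complex.I * ω * ((j : ℕ) : ℤ))) := by
        rw [hp, map_sum]
        refine Finset.sum_congr rfl fun j _ => ?_
        rw [map_mul, conj_ee]
      rw [h2, ← mul_assoc, Finset.mul_sum]
      refine Finset.sum_congr rfl fun j _ => by ring
    simp_rw [this]
    rw [integral_finsetSum, Finset.mul_sum]
    · refine Finset.sum_congr rfl fun j _ => ?_
      rw [integral_const_mul]
      unfold cf
      ring
    · intro j _
      refine Integrable.const_mul ?_ _
      have := int_ee_mul hfi (-(j : ℤ))
      refine this.congr ?_
      filter_upwards with ω
      rw [ee_neg]; ring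
  rw [key, Complex.ofReal_re]
  have hb := bessel_fin hpL n 0
  simp only [sub_zero] at hb
  rw [hp] at hb
  simp_rw [cf_trig x] at hb
  have hpi0 : (0:ℝ) < (2 * Real.pi)⁻¹ := by have := Real.pi_pos; positivity
  have hint : m * ∫ ω, ‖p ω‖ ^ 2 ∂mu ≤ ∫ ω, v ω * ‖p ω‖ ^ 2 ∂mu := by
    rw [← integral_const_mul]
    refine integral_mono_ae (hpi.const_mul m) hvp ?_
    filter_upwards [hlow] with ω h
    gcongr
  calc m * ∑ j, ‖x j‖ ^ 2 ≤ m * ((2 * Real.pi)⁻¹ * ∫ ω, ‖p ω‖ ^ 2 ∂mu) := by gcongr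
    _ = (2 * Real.pi)⁻¹ * (m * ∫ ω, ‖p ω‖ ^ 2 ∂mu) := by ring
    _ ≤ _ := by gcongr

lemma lower {n : ℕ} (v : ℝ → ℝ) (M₁ m : ℝ) (hm : 0 < m) (hv : Integrable v mu)
    (hM1 : ∀ᵐ ω ∂mu, |v ω| ≤ M₁) (hlow : ∀ᵐ ω ∂mu, m ≤ v ω) (x : Fin n → ℂ) :
    m ^ 2 * ∑ j, ‖x j‖ ^ 2 ≤ ∑ j, ‖(Toep n v).mulVec x j‖ ^ 2 := by
  have h := coercive v M₁ m hm hv hM1 hlow x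
  set y := (Toep n v).mulVec x
  have h2 : (∑ j, (starRingEnd ℂ) (x j) * y j).re ≤ ∑ j, ‖x j‖ * ‖y j‖ := by
    refine (Complex.re_le_norm _).trans ((norm_sum_le _ _).trans (le_of_eq ?_))
    simp
  have h3 := Finset.sum_mul_sq_le_sq_mul_sq Finset.univ (fun j => ‖x j‖) (fun j => ‖y j‖)
  have hS : 0 ≤ ∑ j, ‖x j‖ ^ 2 := by positivity
  have hY : 0 ≤ ∑ j, ‖y j‖ ^ 2 := by positivity
  generalize ∑ j, ‖x j‖ ^ 2 = S at *
  generalize ∑ j, ‖y j‖ ^ 2 = Y at *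
  rcases hS.eq_or_lt with h0 | h0
  · rw [← h0]; simpa using hY
  · have h4 : (m * S) ^ 2 ≤ S * Y :=
      (pow_le_pow_left₀ (by positivity) (h.trans h2) 2).trans h3
    have : S * (m ^ 2 * S) ≤ S * Y := by nlinarith
    exact le_of_mul_le_mul_left this h0

lemma toep_unit {n : ℕ} (v : ℝ → ℝ) (M₁ m : ℝ) (hm : 0 < m) (hv : Integrable v mu)
    (hM1 : ∀ᵐ ω ∂mu, |v ω| ≤ M₁) (hlow : ∀ᵐ ω ∂mu, m ≤ v ω) : IsUnit (Toep n v) := by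
  rw [← Matrix.mulVec_injective_iff_isUnit]
  intro a b hab
  have h := lower v M₁ m hm hv hM1 hlow (a - b)
  have h0 : (Toep n v).mulVec (a - b) = 0 := by
    rw [Matrix.mulVec_sub]; simpa [sub_eq_zero] using hab
  rw [h0] at h
  simp only [Pi.zero_apply, norm_zero] at h
  have h1 : ∑ j, ‖(a - b) j‖ ^ 2 ≤ 0 := by
    have : m ^ 2 * ∑ j, ‖(a - b) j‖ ^ 2 ≤ m ^ 2 * 0 := by simpa using h
    exact le_of_mul_le_mul_left this (by positivity)
  have h2 := (Finset.sum_eq_zero_iff_of_nonneg (fun j _ => by positivity)).1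
    (le_antisymm h1 (by positivity))
  ext j
  have := h2 j (Finset.mem_univ _)
  simpa [sub_eq_zero] using this

/-- The projected remainder. -/
noncomputable def gk (n : ℕ) (u : ℝ → ℝ) (k : Fin n) (ω : ℝ) : ℂ :=
  ee k ω * (u ω : ℂ) - ∑ l : Fin n, fCoef u ((l : ℤ) - k) * ee l ω

lemma gk_memLp {n : ℕ} {u : ℝ → ℝ} (hu : MemLp (fun ω => (u ω : ℂ)) 2 mu) (k : Fin n) :
    MemLp (gk n u k) 2 mu :=
  (memLp_ee_mul hu k).sub (trig_memLp _)

lemma gk_cf {n : ℕ} {u : ℝ → ℝ} (hu : Integrable u mu) (k : Fin n) (d : ℤ) :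
    ‖cf (gk n u k) (d + k)‖ ^ 2 =
      if 0 ≤ d + k ∧ d + k < n then 0 else ‖fCoef u d‖ ^ 2 := by
  unfold gk
  rw [cf_sub _ _ (int_ee_mul (int_ofReal hu) _) (memLp_one_iff_integrable.1 (trig_memLp _)), cf_shift,
    add_sub_cancel_right]
  have e : cf (fun ω => (u ω : ℂ)) d = fCoef u d := rfl
  rw [e]
  split_ifs with h
  · obtain ⟨i, hi⟩ := Int.eq_ofNat_of_zero_le h.1
    have hin : i < n := by have := h.2; rw [hi] at this; exact_mod_cast this
    have := cf_trig (n := n) (fun l => fCoef u ((l : ℤ) - k)) ⟨i, hin⟩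
    rw [hi]
    simp only at this
    rw [this, ← hi]
    simp
  · rw [cf_sum _ _ _ (fun i _ => memLp_one_iff_integrable.1 (memLp_ee _)), Finset.sum_eq_zero,
      sub_zero]
    intro l _
    rw [cf_ee, if_neg, mul_zero]
    intro hl
    apply h
    have := l.2
    omega

lemma count_le (n : ℕ) (d : ℤ) (c : ℝ) (hc : 0 ≤ c) :
    ∑ k : Fin n, (if 0 ≤ d + (k : ℤ) ∧ d + (k : ℤ) < n then 0 else c) ≤ |(d : ℝ)| * c := by
  have h1 : ∑ k : Fin n, (if 0 ≤ d + (k : ℤ) ∧ d + (k : ℤ) < n then 0 else c) =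
      ((Finset.univ.filter fun k : Fin n => ¬ (0 ≤ d + (k : ℤ) ∧ d + (k : ℤ) < n)).card : ℝ) * c := by
    rw [← nsmul_eq_mul, ← Finset.sum_const, Finset.sum_filter]
    refine Finset.sum_congr rfl fun k _ => ?_
    split_ifs <;> simp_all
  rw [h1]
  gcongr
  have h2 : (Finset.univ.filter fun k : Fin n => ¬ (0 ≤ d + (k : ℤ) ∧ d + (k : ℤ) < n)).card ≤
      d.natAbs := by
    rcases le_total 0 d with hd | hd
    · have : (Finset.univ.filter fun k : Fin n =>
          ¬ (0 ≤ d + (k : ℤ) ∧ d + (k : ℤ) < n)).card ≤ (Finset.Ico ((n : ℤ) - d) n).card := by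
        refine Finset.card_le_card_of_injOn (fun k => (k : ℤ)) ?_ fin_cast_inj.injOn
        intro k hk
        simp at hk ⊢
        omega
      rw [Int.card_Ico] at this
      omega
    · have : (Finset.univ.filter fun k : Fin n =>
          ¬ (0 ≤ d + (k : ℤ) ∧ d + (k : ℤ) < n)).card ≤ (Finset.Ico (0 : ℤ) (-d)).card := by
        refine Finset.card_le_card_of_injOn (fun k => (k : ℤ)) ?_ fin_cast_inj.injOn
        intro k hk
        simp at hk ⊢
        omega
      rw [Int.card_Ico] at this
      omega
  calc _ ≤ (d.natAbs : ℝ) := by exact_mod_cast h2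
    _ = |(d : ℝ)| := by rw [← Int.cast_abs, Int.abs_eq_natAbs]; simp

lemma gk_sum {n : ℕ} {u : ℝ → ℝ} (hu1 : Integrable u mu)
    (hu : MemLp (fun ω => (u ω : ℂ)) 2 mu)
    (hsum : Summable fun j : ℤ => |(j : ℝ)| * ‖fCoef u j‖ ^ 2) :
    ∑ k, (2 * Real.pi)⁻¹ * ∫ ω, ‖gk n u k ω‖ ^ 2 ∂mu ≤ ∑' j : ℤ, |(j : ℝ)| * ‖fCoef u j‖ ^ 2 := by
  have h1 : ∀ k : Fin n, HasSum (fun d : ℤ => ‖cf (gk n u k) (d + k)‖ ^ 2)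
      ((2 * Real.pi)⁻¹ * ∫ ω, ‖gk n u k ω‖ ^ 2 ∂mu) := fun k =>
    (Equiv.hasSum_iff (Equiv.addRight (k : ℤ))).2 (parseval (gk_memLp hu k))
  have h2 := hasSum_sum (s := Finset.univ) fun k _ => h1 k
  refine hasSum_le ?_ h2 hsum.hasSum
  intro d
  simp_rw [gk_cf hu1]
  exact count_le n d _ (by positivity)

lemma R_entry {n : ℕ} (v u : ℝ → ℝ) (hv : Integrable v mu) (hvu : Integrable (fun ω => v ω * u ω) mu)
    (j k : Fin n) :
    (Toep n (fun ω => v ω * u ω) - Toep n v * Toep n u) j k =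
      cf (fun ω => (v ω : ℂ) * gk n u k ω) j := by
  have e : (fun ω => (v ω : ℂ) * gk n u k ω) = fun ω => ee k ω * ((v ω * u ω : ℝ) : ℂ) -
      (v ω : ℂ) * ∑ l : Fin n, fCoef u ((l : ℤ) - k) * ee l ω := by
    ext ω
    unfold gk
    push_cast
    ring
  rw [e, cf_sub _ _ (int_ee_mul (int_ofReal hvu) _)
    (memLp_one_iff_integrable.1 (trig_mul_memLp _ (memLp_one_iff_integrable.2 (int_ofReal hv)))),
    cf_shift, ← toep_mulVec v hv]
  rfl

lemma R_sum {n : ℕ} (v u : ℝ → ℝ) (M₁ : ℝ) (hv : Integrable v mu) (hu1 : Integrable u mu)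
    (hvu : Integrable (fun ω => v ω * u ω) mu)
    (hu : MemLp (fun ω => (u ω : ℂ)) 2 mu)
    (hM1 : ∀ᵐ ω ∂mu, |v ω| ≤ M₁)
    (hsum : Summable fun j : ℤ => |(j : ℝ)| * ‖fCoef u j‖ ^ 2) :
    ∑ k, ∑ j, ‖(Toep n (fun ω => v ω * u ω) - Toep n v * Toep n u) j k‖ ^ 2 ≤
      M₁ ^ 2 * ∑' j : ℤ, |(j : ℝ)| * ‖fCoef u j‖ ^ 2 := by
  refine le_trans ?_ (mul_le_mul_of_nonneg_left (gk_sum (n := n) hu1 hu hsum) (sq_nonneg M₁))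
  rw [Finset.mul_sum]
  refine Finset.sum_le_sum fun k _ => ?_
  simp_rw [R_entry v u hv hvu]
  have hg := gk_memLp hu k
  have hb : ∀ᵐ ω ∂mu, ‖(v ω : ℂ) * gk n u k ω‖ ≤ M₁ * ‖gk n u k ω‖ := by
    filter_upwards [hM1] with ω h
    rw [norm_mul, Complex.norm_real]
    gcongr
    exact h
  have hvg : MemLp (fun ω => (v ω : ℂ) * gk n u k ω) 2 mu :=
    hg.of_le_mul ((int_ofReal hv).1.mul hg.1) hb
  have h1 := bessel_fin hvg n 0
  simp only [sub_zero] at h1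
  refine h1.trans ?_
  have hpi0 : (0:ℝ) < (2 * Real.pi)⁻¹ := by have := Real.pi_pos; positivity
  have h2 : ∫ ω, ‖(v ω : ℂ) * gk n u k ω‖ ^ 2 ∂mu ≤ M₁ ^ 2 * ∫ ω, ‖gk n u k ω‖ ^ 2 ∂mu := by
    rw [← integral_const_mul]
    refine integral_mono_ae (hvg.integrable_norm_pow (by norm_num))
      ((hg.integrable_norm_pow (by norm_num)).const_mul _) ?_
    filter_upwards [hb] with ω h
    calc _ ≤ (M₁ * ‖gk n u k ω‖) ^ 2 := by gcongr
      _ = _ := by ring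
  calc _ ≤ (2 * Real.pi)⁻¹ * (M₁ ^ 2 * ∫ ω, ‖gk n u k ω‖ ^ 2 ∂mu) := by gcongr
    _ = _ := by ring

lemma trace_le {n : ℕ} (X : Matrix (Fin n) (Fin n) ℂ) :
    (Matrix.trace (X * X)).re ≤ ∑ k, ∑ j, ‖X j k‖ ^ 2 := by
  have h1 : (Matrix.trace (X * X)).re ≤ ∑ k, ∑ j, ‖X k j‖ * ‖X j k‖ := by
    refine (Complex.re_le_norm _).trans ?_
    unfold Matrix.trace
    refine (norm_sum_le _ _).trans (Finset.sum_le_sum fun k _ => ?_)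
    rw [Matrix.diag_apply, Matrix.mul_apply]
    refine (norm_sum_le _ _).trans (le_of_eq ?_)
    simp
  have h2 : ∑ k, ∑ j, ‖X k j‖ * ‖X j k‖ ≤
      ∑ k, ∑ j, (‖X k j‖ ^ 2 / 2 + ‖X j k‖ ^ 2 / 2) := by
    gcongr with k _ j _
    nlinarith [sq_nonneg (‖X k j‖ - ‖X j k‖)]
  have h3 : ∑ k, ∑ j, ‖X k j‖ ^ 2 / 2 = ∑ k, ∑ j, ‖X j k‖ ^ 2 / 2 := Finset.sum_comm
  refine h1.trans (h2.trans (le_of_eq ?_))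
  simp_rw [Finset.sum_add_distrib]
  rw [h3]
  simp_rw [← Finset.sum_add_distrib, add_halves]

end Stmt19Aux

open Stmt19Aux

/-- Lemma, part (vi):
`tr{[T_n(v)⁻¹ T_n(vu)]²} ≤ (n/π) ∫_{−π}^{π} u(ω)² dω + 8 m⁻² M₁² M₂`. -/
theorem stmt19 (n : ℕ) (hn : 1 ≤ n) (v u : ℝ → ℝ) (M₁ M₂ m : ℝ) (hm : 0 < m)
    (hv1 : IntegrableOn v (Set.Icc (-Real.pi) Real.pi))
    (hv2 : IntegrableOn (fun ω => (v ω) ^ 2) (Set.Icc (-Real.pi) Real.pi))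
    (hu1 : IntegrableOn u (Set.Icc (-Real.pi) Real.pi))
    (hu2 : IntegrableOn (fun ω => (u ω) ^ 2) (Set.Icc (-Real.pi) Real.pi))
    (hM1 : ∀ᵐ ω ∂(volume.restrict (Set.Icc (-Real.pi) Real.pi)), |v ω| ≤ M₁)
    (hlow : ∀ᵐ ω ∂(volume.restrict (Set.Icc (-Real.pi) Real.pi)), m ≤ v ω)
    (hsum : Summable fun j : ℤ => |(j : ℝ)| * ‖fCoef u j‖ ^ 2)
    (hM2 : (∑' j : ℤ, |(j : ℝ)| * ‖fCoef u j‖ ^ 2) ≤ M₂) :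
    (Matrix.trace
        (((Toep n v)⁻¹ * Toep n (fun ω => v ω * u ω)) *
          ((Toep n v)⁻¹ * Toep n (fun ω => v ω * u ω)))).re ≤
      (n : ℝ) / Real.pi * (∫ ω in Set.Icc (-Real.pi) Real.pi, (u ω) ^ 2) +
        8 * (m ^ 2)⁻¹ * M₁ ^ 2 * M₂ := by
  have hum : AEStronglyMeasurable u mu := hu1.1
  have hu : MemLp (fun ω => (u ω : ℂ)) 2 mu :=
    MemLp.ofReal ((memLp_two_iff_integrable_sq hum).2 hu2)
  have hvu : Integrable (fun ω => v ω * u ω) mu := by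
    refine (Integrable.const_mul hu1.norm M₁).mono' (hv1.1.mul hum) ?_
    filter_upwards [hM1] with ω h
    rw [norm_mul]
    gcongr
    exact h
  have hR := R_sum (n := n) v u M₁ hv1 hu1 hvu hu hM1 hsum
  have hA : IsUnit (Toep n v).det :=
    (Matrix.isUnit_iff_isUnit_det _).1 (toep_unit v M₁ m hm hv1 hM1 hlow)
  set A := Toep n v with hAd
  set B := Toep n (fun ω => v ω * u ω) with hBd
  set T := Toep n u with hTd
  set Y := A⁻¹ * (B - A * T) with hY
  have hX : A⁻¹ * B = T + Y := by
    rw [hY, Matrix.mul_sub, ← Matrix.mul_assoc, Matrix.nonsing_inv_mul _ hA, Matrix.one_mul]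
    abel
  have hAY : A * Y = B - A * T := by
    rw [hY, ← Matrix.mul_assoc, Matrix.mul_nonsing_inv _ hA, Matrix.one_mul]
  have hYs : m ^ 2 * ∑ k, ∑ j, ‖Y j k‖ ^ 2 ≤ M₁ ^ 2 * M₂ := by
    refine le_trans ?_ (hR.trans (mul_le_mul_of_nonneg_left hM2 (sq_nonneg M₁)))
    rw [Finset.mul_sum]
    refine Finset.sum_le_sum fun k _ => ?_
    have := lower v M₁ m hm hv1 hM1 hlow (fun j => Y j k)
    rw [← hAY]
    exact this
  have hTs : ∑ k, ∑ j, ‖T j k‖ ^ 2 ≤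
      n * ((2 * Real.pi)⁻¹ * ∫ ω in Set.Icc (-Real.pi) Real.pi, (u ω) ^ 2) := by
    have : ∀ k : Fin n, ∑ j, ‖T j k‖ ^ 2 ≤
        (2 * Real.pi)⁻¹ * ∫ ω in Set.Icc (-Real.pi) Real.pi, (u ω) ^ 2 := by
      intro k
      have := bessel_fin hu n k
      simp only [Complex.norm_real, Real.norm_eq_abs, sq_abs] at this
      exact this
    refine (Finset.sum_le_sum fun k _ => this k).trans (le_of_eq ?_)
    simp
  have hM0 : 0 ≤ M₁ ^ 2 * M₂ := le_trans (by positivity) hYs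
  rw [hX]
  refine (trace_le _).trans ?_
  have h1 : ∑ k, ∑ j, ‖(T + Y) j k‖ ^ 2 ≤
      2 * (∑ k, ∑ j, ‖T j k‖ ^ 2) + 2 * (∑ k, ∑ j, ‖Y j k‖ ^ 2) := by
    simp_rw [Finset.mul_sum, ← Finset.sum_add_distrib]
    refine Finset.sum_le_sum fun k _ => Finset.sum_le_sum fun j _ => ?_
    have : ‖(T + Y) j k‖ ≤ ‖T j k‖ + ‖Y j k‖ := norm_add_le _ _
    nlinarith [sq_nonneg (‖T j k‖ - ‖Y j k‖), norm_nonneg ((T + Y) j k)]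
  have h2 : ∑ k, ∑ j, ‖Y j k‖ ^ 2 ≤ (m ^ 2)⁻¹ * (M₁ ^ 2 * M₂) := by
    rw [inv_mul_eq_div, le_div_iff₀ (by positivity)]
    linarith
  have h3 : 0 ≤ (m ^ 2)⁻¹ * (M₁ ^ 2 * M₂) := by positivity
  have h4 : 2 * (n * ((2 * Real.pi)⁻¹ * ∫ ω in Set.Icc (-Real.pi) Real.pi, (u ω) ^ 2)) =
      (n : ℝ) / Real.pi * ∫ ω in Set.Icc (-Real.pi) Real.pi, (u ω) ^ 2 := by
    have := Real.pi_ne_zero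
    field_simp
  have h5 : 8 * (m ^ 2)⁻¹ * M₁ ^ 2 * M₂ = 8 * ((m ^ 2)⁻¹ * (M₁ ^ 2 * M₂)) := by ring
  linarith
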